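/- Let f₁,…,f_n be monotone linear functions that are neither colinear nor potentially identical. Then a permutation σ of [n] is minimum if and only if σ is counterclockwise and θ(f^σ)+π ∈ [θ(f_{σ(t)}), θ(f_{σ(s)})]_{2π}, where s and t denote, respectively, the first and the last index i∈[n] such that f_{σ(i)} is non-identical. -/

import Mathlib

/-- A linear function `x ↦ a*x + b`. -/
structure LinFun where
  a : ℝ
  b : ℝ

namespace LinFun

/-- Evaluation of a linear function. -/
def eval (f : LinFun) (x : ℝ) : ℝ := f.a * x + f.b

/-- Composition: `h.comp g` is the linear function `x ↦ h (g x)`. -/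
def comp (h g : LinFun) : LinFun := ⟨h.a * g.a, h.a * g.b + h.b⟩

/-- The identical linear function `x ↦ x`. -/
def idf : LinFun := ⟨1, 0⟩

/-- `f` is the identical function (equivalently, its vector `(β f, 1 - α f)` is `(0,0)`,
i.e. its angle is `⊥`). -/
def IsId (f : LinFun) : Prop := f = idf

/-- The Euclidean norm of the vector `(β f, 1 - α f)` associated to `f`. -/
noncomputable def vecNorm (f : LinFun) : ℝ := Real.sqrt (f.b ^ 2 + (1 - f.a) ^ 2)

/-- The polar angle in `[0, 2π)` of the vector `(β f, 1 - α f)` associated to `f`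
(meaningful only when `f` is not identical). -/
noncomputable def theta (f : LinFun) : ℝ :=
  if 0 ≤ Complex.arg ⟨f.b, 1 - f.a⟩ then Complex.arg ⟨f.b, 1 - f.a⟩
  else Complex.arg ⟨f.b, 1 - f.a⟩ + 2 * Real.pi

end LinFun

/-- Congruence of angles modulo `2π`: `x ≡_{2π} y`. -/
def Cong (x y : ℝ) : Prop := ∃ k : ℤ, x - y = 2 * Real.pi * k

/-- The set `[t1, t2]_{2π}`. -/
def Icc2pi (t1 t2 : ℝ) : Set ℝ :=
  {θ | ∃ l1 l2 : ℝ, Cong l1 t1 ∧ Cong l2 t2 ∧ 0 ≤ l2 - l1 ∧ l2 - l1 < 2 * Real.pi ∧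
    θ ∈ Set.Icc l1 l2}

/-- The set `(t1, t2)_{2π}`. -/
def Ioo2pi (t1 t2 : ℝ) : Set ℝ :=
  {θ | ∃ l1 l2 : ℝ, Cong l1 t1 ∧ Cong l2 t2 ∧ 0 ≤ l2 - l1 ∧ l2 - l1 < 2 * Real.pi ∧
    θ ∈ Set.Ioo l1 l2}

/-- Composite of a list of linear functions: `compList [g₁, …, g_m] = g_m ∘ ⋯ ∘ g₁`. -/
def compList (L : List LinFun) : LinFun := L.foldl (fun acc g => g.comp acc) LinFun.idf

/-- The list `f_{σ(1)}, …, f_{σ(n)}` (0-indexed positions). -/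
def permList {n : ℕ} (f : Fin n → LinFun) (σ : Equiv.Perm (Fin n)) : List LinFun :=
  List.ofFn fun i => f (σ i)

/-- `f^σ = f_{σ(n)} ∘ ⋯ ∘ f_{σ(1)}`. -/
def permComp {n : ℕ} (f : Fin n → LinFun) (σ : Equiv.Perm (Fin n)) : LinFun :=
  compList (permList f σ)

/-- The composite of the functions at the (0-indexed) positions `a, a+1, …, b` of `σ`:
`f_{σ(b)} ∘ ⋯ ∘ f_{σ(a)}` (in 0-indexed notation). -/
def segComp {n : ℕ} (f : Fin n → LinFun) (σ : Equiv.Perm (Fin n)) (a b : ℕ) : LinFun :=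
  compList (((permList f σ).drop a).take (b + 1 - a))

/-- The composite corresponding to the `k`-shift `σ_k` of `σ`:
`f^{σ_k} = f_{σ(k)} ∘ ⋯ ∘ f_{σ(1)} ∘ f_{σ(n)} ∘ ⋯ ∘ f_{σ(k+1)}` (1-indexed notation). -/
def shiftComp {n : ℕ} (f : Fin n → LinFun) (σ : Equiv.Perm (Fin n)) (k : ℕ) : LinFun :=
  compList ((permList f σ).rotate k)

/-- `σ` is a minimum (optimal) permutation for `f₁, …, f_n`. -/
def IsMinimum {n : ℕ} (f : Fin n → LinFun) (σ : Equiv.Perm (Fin n)) : Prop :=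
  ∀ ρ : Equiv.Perm (Fin n), (permComp f σ).b ≤ (permComp f ρ).b

/-- `μ` belongs to the neighbourhood `N(σ)`: it is obtained from `σ` by swapping two
adjacent blocks of positions, `(l, …, m)` and `(m+1, …, r)` (0-indexed, `l ≤ m < r < n`). -/
def InNbhd {n : ℕ} (σ μ : Equiv.Perm (Fin n)) : Prop :=
  ∃ (l m r : ℕ) (_ : l ≤ m) (_ : m < r) (_ : r < n),
    (∀ i : Fin n, (i.val < l ∨ r < i.val) → μ i = σ i) ∧
    (∀ i : Fin n, ∀ _ : l ≤ i.val, ∀ _ : i.val < l + r - m,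
      μ i = σ ⟨i.val + m + 1 - l, by omega⟩) ∧
    (∀ i : Fin n, ∀ _ : l + r - m ≤ i.val, ∀ _ : i.val ≤ r,
      μ i = σ ⟨i.val + m - r, by omega⟩)

/-- `σ` is locally optimal for `f₁, …, f_n`. -/
def LocallyOptimal {n : ℕ} (f : Fin n → LinFun) (σ : Equiv.Perm (Fin n)) : Prop :=
  ∀ μ : Equiv.Perm (Fin n), InNbhd σ μ → (permComp f σ).b ≤ (permComp f μ).b

/-- `σ` is counterclockwise: ignoring the identical functions, some rotation of the sequence
of angles `θ(f_{σ(1)}), …, θ(f_{σ(n)})` is nondecreasing. -/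
def Counterclockwise {n : ℕ} (f : Fin n → LinFun) (σ : Equiv.Perm (Fin n)) : Prop :=
  ∃ c : ℕ, ∀ i j : Fin n, ¬ (f (σ i)).IsId → ¬ (f (σ j)).IsId →
    ((c ≤ i.val ∧ i ≤ j) ∨ (i ≤ j ∧ j.val < c) ∨ (c ≤ i.val ∧ j.val < c)) →
    (f (σ i)).theta ≤ (f (σ j)).theta

/-- `f₁, …, f_n` are colinear: all vectors lie on one line through the origin. -/
def Colinear {n : ℕ} (f : Fin n → LinFun) : Prop :=
  ∃ lam : ℝ, ∀ i : Fin n,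
    (f i).IsId ∨ Cong ((f i).theta) lam ∨ Cong ((f i).theta) (lam + Real.pi)

/-- `f₁, …, f_n` are potentially identical: some counterclockwise permutation composes
to the identical function. -/
def PotentiallyIdentical {n : ℕ} (f : Fin n → LinFun) : Prop :=
  ∃ σ : Equiv.Perm (Fin n), Counterclockwise f σ ∧ (permComp f σ).IsId

/-- The ε-perturbation `f^{(ε)}` of a linear function. -/
noncomputable def epsPert (f : LinFun) (ε : ℝ) : LinFun := if f.a = 0 then ⟨ε, f.b⟩ else f

/-!
Relative to a direction `φ`, split `vec f` into its coordinates along and across `φ`. Exchanging two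
adjacent blocks of a composite changes `β` by a positive multiple of the determinant of their
vectors, so in a minimum permutation `det ≥ 0` for any two adjacent blocks. Take for `φ` the
direction opposite to `vec f^σ`. By a cyclic identity between determinants and across-coordinates,
a block to the right of `φ` is never followed by one to the left of `φ`. Hence the functions to
the left of `φ` come first and those to the right come last, and inside each half-plane `det ≥ 0`
sorts the angles. Only functions in direction `φ` itself may appear at both ends.

Conversely, functions of equal angle commute, so all permutations sorted from `φ` have the same
composite `F`. Any counterclockwise permutation is a rotation of one of these, and rotating does
not decrease `β`: the block that is moved lies to the left of `φ`, which is opposite to `vec F`.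

If a minimum permutation were to compose to the identity, the same argument applied to all its
functions but the first, with `φ` the direction of the first, would make the permutation
counterclockwise, and the functions potentially identical.
-/

section Angles

variable {φ θ α β x : ℝ}

/-- The angle in `[0, 2π)` from the direction of angle `φ` counterclockwise to that of `θ`. -/
noncomputable def ccwAngle (φ θ : ℝ) : ℝ := toIcoMod Real.two_pi_pos 0 (θ - φ)

theorem ccwAngle_mem_Ico (φ θ : ℝ) : ccwAngle φ θ ∈ Set.Ico 0 (2 * Real.pi) :=
  toIcoMod_mem_Ico' Real.two_pi_pos (θ - φ)

theorem cong_add_ccwAngle (φ θ : ℝ) : Cong (φ + ccwAngle φ θ) θ := by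
  refine ⟨-toIcoDiv Real.two_pi_pos 0 (θ - φ), ?_⟩
  have := toIcoMod_add_toIcoDiv_zsmul Real.two_pi_pos 0 (θ - φ)
  rw [zsmul_eq_mul] at this
  rw [ccwAngle]
  push_cast
  linarith

theorem cong_of_ccwAngle_eq_zero (h : ccwAngle φ θ = 0) : Cong θ φ := by
  obtain ⟨k, hk⟩ := cong_add_ccwAngle φ θ
  refine ⟨-k, ?_⟩
  push_cast
  linarith

theorem ccwAngle_eq_of_cong (hx : x ∈ Set.Ico 0 (2 * Real.pi)) (h : Cong (φ + x) θ) :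
    ccwAngle φ θ = x := by
  obtain ⟨k, hk⟩ := h
  refine (toIcoMod_eq_iff Real.two_pi_pos).mpr ⟨by simpa using hx, -k, ?_⟩
  rw [neg_smul, zsmul_eq_mul]
  linarith

theorem ccwAngle_eq_ite (φ φ' θ : ℝ) :
    ccwAngle φ' θ = if ccwAngle φ φ' ≤ ccwAngle φ θ then ccwAngle φ θ - ccwAngle φ φ'
      else ccwAngle φ θ - ccwAngle φ φ' + 2 * Real.pi := by
  obtain ⟨hφ'0, hφ'⟩ := ccwAngle_mem_Ico φ φ'
  obtain ⟨hθ0, hθ⟩ := ccwAngle_mem_Ico φ θ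
  obtain ⟨k, hk⟩ := cong_add_ccwAngle φ φ'
  obtain ⟨m, hm⟩ := cong_add_ccwAngle φ θ
  split_ifs with h
  · refine ccwAngle_eq_of_cong ⟨by linarith, by linarith⟩ ⟨m - k, ?_⟩
    push_cast
    linarith
  · refine ccwAngle_eq_of_cong ⟨by linarith, by linarith⟩ ⟨m - k + 1, ?_⟩
    push_cast
    linarith

/-- The arc of `Icc2pi α β` containing `φ` runs from `φ`, or from `φ + ccwAngle φ α - 2π`, up to
`φ + ccwAngle φ β`. -/
theorem mem_Icc2pi_iff : φ ∈ Icc2pi α β ↔ ccwAngle φ α = 0 ∨ ccwAngle φ β < ccwAngle φ α := by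
  obtain ⟨hα0, hα⟩ := ccwAngle_mem_Ico φ α
  obtain ⟨hβ0, hβ⟩ := ccwAngle_mem_Ico φ β
  have hcongα := cong_add_ccwAngle φ α
  have hcongβ := cong_add_ccwAngle φ β
  constructor
  · rintro ⟨l₁, l₂, ⟨k, hk⟩, ⟨m, hm⟩, -, hlt, hl₁, hl₂⟩
    have hβφ : ccwAngle φ β = l₂ - φ :=
      ccwAngle_eq_of_cong ⟨by linarith, by linarith⟩ ⟨m, by linarith⟩
    rcases hl₁.eq_or_lt with rfl | hl₁
    · exact Or.inl (ccwAngle_eq_of_cong ⟨le_rfl, Real.two_pi_pos⟩ ⟨k, by linarith⟩)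
    · right
      have hαφ : ccwAngle φ α = l₁ - φ + 2 * Real.pi :=
        ccwAngle_eq_of_cong ⟨by linarith, by linarith⟩ ⟨k + 1, by push_cast; linarith⟩
      linarith
  · rintro (h | h)
    · rw [h, add_zero] at hcongα
      exact ⟨φ, φ + ccwAngle φ β, hcongα, hcongβ, by linarith, by linarith, le_rfl, by linarith⟩
    · obtain ⟨k, hk⟩ := hcongα
      exact ⟨φ + ccwAngle φ α - 2 * Real.pi, φ + ccwAngle φ β, ⟨k - 1, by push_cast; linarith⟩,
        hcongβ, by linarith, by linarith, by linarith, by linarith⟩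

end Angles

section Lists

/-- Sorting does not determine the order of elements related in both directions; the product of a
sorted list is still well defined as soon as such elements commute. -/
theorem list_prod_eq_of_perm_of_pairwise {M : Type*} [Monoid M] {r : M → M → Prop}
    (hr : ∀ x y, r x y → r y x → Commute x y) {L L' : List M} (hp : L.Perm L')
    (h : L.Pairwise r) (h' : L'.Pairwise r) : L.prod = L'.prod := by
  induction L generalizing L' with
  | nil => rw [hp.nil_eq]
  | cons x T ih =>
    obtain ⟨A, B, rfl⟩ := List.append_of_mem (hp.subset List.mem_cons_self)
    have hT : T.Perm (A ++ B) := (hp.trans List.perm_middle).cons_inv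
    have hcomm : ∀ y ∈ A, Commute x y := fun y hy => by
      obtain ⟨-, -, hA⟩ := List.pairwise_append.mp h'
      exact hr x y ((List.pairwise_cons.mp h).1 y (hT.mem_iff.mpr (List.mem_append_left B hy)))
        (hA y hy x List.mem_cons_self)
    rw [List.prod_cons, ih hT h.of_cons
      (h'.sublist (List.Sublist.append_left (List.sublist_cons_self x B) A)),
      List.prod_append, List.prod_append, List.prod_cons, ← mul_assoc, ← mul_assoc,
      (Commute.list_prod_right A x hcomm).eq]

variable {α : Type*} {L : List α}

theorem exists_eq_append_cons_of_last {p : α → Prop} (h : ∃ x ∈ L, p x) :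
    ∃ A x B, L = A ++ x :: B ∧ p x ∧ ∀ y ∈ B, ¬ p y := by
  induction L using List.reverseRecOn with
  | nil => simp at h
  | append_singleton T z ih =>
    by_cases hz : p z
    · exact ⟨T, z, [], rfl, hz, by simp⟩
    · obtain ⟨x, hx, hpx⟩ := h
      have hxT : x ∈ T := (List.mem_append.mp hx).resolve_right
        fun hxz => hz (List.mem_singleton.mp hxz ▸ hpx)
      obtain ⟨A, y, B, rfl, hy, hB⟩ := ih ⟨x, hxT, hpx⟩
      refine ⟨A, y, B ++ [z], by simp, hy, ?_⟩
      rw [List.forall_mem_append, List.forall_mem_singleton]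
      exact ⟨hB, hz⟩

theorem exists_eq_append_of_pairwise_le {β : Type*} [LinearOrder β] {κ : α → β}
    (h : L.Pairwise fun x y => κ x ≤ κ y) (s : β) :
    ∃ U V, L = U ++ V ∧ (∀ x ∈ U, κ x < s) ∧ ∀ x ∈ V, s ≤ κ x := by
  induction L with
  | nil => exact ⟨[], [], rfl, by simp, by simp⟩
  | cons x T ih =>
    obtain ⟨hx, hT⟩ := List.pairwise_cons.mp h
    rcases lt_or_ge (κ x) s with hxs | hxs
    · obtain ⟨U, V, rfl, hU, hV⟩ := ih hT
      exact ⟨x :: U, V, rfl, List.forall_mem_cons.mpr ⟨hxs, hU⟩, hV⟩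
    · exact ⟨[], x :: T, rfl, by simp,
        List.forall_mem_cons.mpr ⟨hxs, fun y hy => hxs.trans (hx y hy)⟩⟩

theorem isRotated_iff_exists_append {C : List α} :
    L ~r C ↔ ∃ X Y, L = X ++ Y ∧ C = Y ++ X := by
  constructor
  · rw [List.isRotated_iff_mod]
    rintro ⟨k, hk, rfl⟩
    exact ⟨L.take k, L.drop k, (List.take_append_drop k L).symm, List.rotate_eq_drop_append_take hk⟩
  · rintro ⟨X, Y, rfl, rfl⟩
    exact List.isRotated_append

theorem pairwise_drop_append_take_ofFn {n : ℕ} {h : Fin n → α} {r : α → α → Prop}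
    [Std.Refl r] (c : ℕ) :
    ((List.ofFn h).drop c ++ (List.ofFn h).take c).Pairwise r ↔
      ∀ i j : Fin n, (c ≤ i ∧ i ≤ j) ∨ (i ≤ j ∧ j < c) ∨ (c ≤ i ∧ j < c) → r (h i) (h j) := by
  rw [List.pairwise_append, List.pairwise_iff_getElem, List.pairwise_iff_getElem]
  simp only [List.mem_iff_getElem, List.getElem_drop, List.getElem_take, List.getElem_ofFn,
    List.length_drop, List.length_take, List.length_ofFn, lt_min_iff]
  constructor
  · rintro ⟨hdrop, htake, hcross⟩ ⟨i, hi⟩ ⟨j, hj⟩ (⟨hci, hij⟩ | ⟨hij, hjc⟩ | ⟨hci, hjc⟩)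
    · obtain ⟨i, rfl⟩ := Nat.exists_eq_add_of_le hci
      obtain ⟨j, rfl⟩ := Nat.exists_eq_add_of_le (hci.trans hij)
      rcases hij.eq_or_lt with hij | hij
      · exact hij ▸ Std.Refl.refl _
      · exact hdrop i j (by omega) (by omega) (by simpa using hij)
    · rcases hij.eq_or_lt with hij | hij
      · exact hij ▸ Std.Refl.refl _
      · exact htake i j ⟨lt_trans (Fin.mk_lt_mk.mp hij) hjc, hi⟩ ⟨hjc, hj⟩ hij
    · obtain ⟨i, rfl⟩ := Nat.exists_eq_add_of_le hci
      exact hcross _ ⟨i, by omega, rfl⟩ _ ⟨j, ⟨hjc, hj⟩, rfl⟩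
  · intro hr
    refine ⟨fun i j hi hj hij => hr _ _ (Or.inl ⟨by simp, by simpa using hij.le⟩),
      fun i j hi hj hij => hr _ _ (Or.inr (Or.inl ⟨hij.le, hj.1⟩)), ?_⟩
    rintro _ ⟨i, hi, rfl⟩ _ ⟨j, hj, rfl⟩
    exact hr _ _ (Or.inr (Or.inr ⟨by simp, hj.1⟩))

end Lists

attribute [ext] LinFun

/-- Linear functions form a monoid under composition, so that `g * f` applies `f` first. -/
instance : Monoid LinFun where
  mul := LinFun.comp
  one := LinFun.idf
  mul_assoc f g h := by
    ext
    · exact mul_assoc f.a g.a h.a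
    · change f.a * g.a * h.b + (f.a * g.b + f.b) = f.a * (g.a * h.b + g.b) + f.b
      ring
  one_mul f := by
    ext
    · exact one_mul f.a
    · change 1 * f.b + 0 = f.b
      ring
  mul_one f := by
    ext
    · exact mul_one f.a
    · change f.a * 0 + f.b = f.b
      ring

namespace LinFun

variable {φ : ℝ} {f g : LinFun}

theorem mul_a (f g : LinFun) : (f * g).a = f.a * g.a := rfl

theorem mul_b (f g : LinFun) : (f * g).b = f.a * g.b + f.b := rfl

theorem one_a : (1 : LinFun).a = 1 := rfl

theorem one_b : (1 : LinFun).b = 0 := rfl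

/-- The determinant of `vec f` and `vec g`. -/
def det (f g : LinFun) : ℝ := f.b * (1 - g.a) - (1 - f.a) * g.b

/-- The coordinate of `vec f` along the direction of angle `φ`. -/
noncomputable def along (φ : ℝ) (f : LinFun) : ℝ :=
  f.b * Real.cos φ + (1 - f.a) * Real.sin φ

/-- The coordinate of `vec f` along the direction of angle `φ + π / 2`. -/
noncomputable def across (φ : ℝ) (f : LinFun) : ℝ :=
  (1 - f.a) * Real.cos φ - f.b * Real.sin φ

theorem mul_b_le_mul_b_iff : (g * f).b ≤ (f * g).b ↔ 0 ≤ det f g := by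
  rw [mul_b, mul_b, det, ← sub_nonneg]
  ring_nf

theorem commute_of_det_eq_zero (h : det f g = 0) : Commute f g := by
  ext
  · exact mul_comm f.a g.a
  · rw [det] at h
    rw [mul_b, mul_b]
    linear_combination h

theorem det_mul_self_right (f g : LinFun) : det f (g * f) = det f g := by
  simp only [det, mul_a, mul_b]
  ring

theorem det_mul_left (h g f : LinFun) : det (h * g) f = h.a * det g f + det h f := by
  simp only [det, mul_a, mul_b]
  ring

theorem det_swap (f g : LinFun) : det g f = -det f g := by
  simp only [det]
  ring

theorem along_mul (φ : ℝ) (h g : LinFun) :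
    along φ (h * g) = h.a * along φ g + along φ h := by
  simp only [along, mul_a, mul_b]
  ring

theorem across_mul (φ : ℝ) (h g : LinFun) :
    across φ (h * g) = h.a * across φ g + across φ h := by
  simp only [across, mul_a, mul_b]
  ring

theorem along_one (φ : ℝ) : along φ 1 = 0 := by
  simp [along, one_a, one_b]

theorem across_one (φ : ℝ) : across φ 1 = 0 := by
  simp [across, one_a, one_b]

theorem along_add_pi (φ : ℝ) (f : LinFun) : along (φ + Real.pi) f = -along φ f := by
  simp only [along, Real.cos_add_pi, Real.sin_add_pi]
  ring

theorem across_add_pi (φ : ℝ) (f : LinFun) : across (φ + Real.pi) f = -across φ f := by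
  simp only [across, Real.cos_add_pi, Real.sin_add_pi]
  ring

theorem det_eq_along_mul_across (φ : ℝ) (f g : LinFun) :
    det f g = along φ f * across φ g - across φ f * along φ g := by
  simp only [det, along, across]
  linear_combination -(f.b * (1 - g.a) - (1 - f.a) * g.b) * Real.sin_sq_add_cos_sq φ

theorem across_mul_det_cyclic (φ : ℝ) (f g h : LinFun) :
    across φ f * det g h + across φ g * det h f + across φ h * det f g = 0 := by
  simp only [det, across]
  ring

theorem vecNorm_eq_norm (f : LinFun) : f.vecNorm = ‖(⟨f.b, 1 - f.a⟩ : ℂ)‖ := by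
  rw [Complex.norm_eq_sqrt_sq_add_sq, vecNorm]

theorem vecNorm_pos (hf : f ≠ 1) : 0 < f.vecNorm := by
  rw [vecNorm_eq_norm, norm_pos_iff]
  intro h
  have hb : f.b = 0 := congrArg Complex.re h
  have ha : 1 - f.a = 0 := congrArg Complex.im h
  exact hf (LinFun.ext (sub_eq_zero.mp ha).symm hb)

theorem vecNorm_mul_cos_theta (f : LinFun) : f.vecNorm * Real.cos f.theta = f.b := by
  rw [vecNorm_eq_norm, theta]
  split_ifs
  · exact Complex.norm_mul_cos_arg _
  · rw [Real.cos_add_two_pi]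
    exact Complex.norm_mul_cos_arg _

theorem vecNorm_mul_sin_theta (f : LinFun) : f.vecNorm * Real.sin f.theta = 1 - f.a := by
  rw [vecNorm_eq_norm, theta]
  split_ifs
  · exact Complex.norm_mul_sin_arg _
  · rw [Real.sin_add_two_pi]
    exact Complex.norm_mul_sin_arg _

theorem theta_mem_Ico (f : LinFun) : f.theta ∈ Set.Ico 0 (2 * Real.pi) := by
  have := Complex.neg_pi_lt_arg ⟨f.b, 1 - f.a⟩
  have := Complex.arg_le_pi ⟨f.b, 1 - f.a⟩
  have := Real.pi_pos
  rw [theta]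
  split_ifs
  · constructor <;> linarith
  · constructor <;> linarith

/-- The angle in `[0, 2π)` from the direction of angle `φ` counterclockwise to `vec f`. -/
noncomputable def relAngle (φ : ℝ) (f : LinFun) : ℝ := ccwAngle φ f.theta

theorem relAngle_zero (f : LinFun) : relAngle 0 f = f.theta :=
  ccwAngle_eq_of_cong f.theta_mem_Ico ⟨0, by simp⟩

theorem relAngle_theta (f : LinFun) : relAngle f.theta f = 0 :=
  ccwAngle_eq_of_cong ⟨le_rfl, Real.two_pi_pos⟩ ⟨0, by simp⟩

theorem relAngle_nonneg (φ : ℝ) (f : LinFun) : 0 ≤ relAngle φ f :=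
  (ccwAngle_mem_Ico φ f.theta).1

theorem relAngle_lt_two_pi (φ : ℝ) (f : LinFun) : relAngle φ f < 2 * Real.pi :=
  (ccwAngle_mem_Ico φ f.theta).2

theorem relAngle_of_lt_pi (h : relAngle (φ + Real.pi) f < Real.pi) :
    relAngle φ f = relAngle (φ + Real.pi) f + Real.pi := by
  have := relAngle_nonneg (φ + Real.pi) f
  obtain ⟨k, hk⟩ := cong_add_ccwAngle (φ + Real.pi) f.theta
  refine ccwAngle_eq_of_cong ⟨by linarith [Real.pi_pos], by linarith⟩ ⟨k, ?_⟩
  rw [relAngle]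
  linarith

theorem relAngle_eq_ite (φ φ' : ℝ) (f : LinFun) :
    relAngle φ' f = if ccwAngle φ φ' ≤ relAngle φ f then relAngle φ f - ccwAngle φ φ'
      else relAngle φ f - ccwAngle φ φ' + 2 * Real.pi :=
  ccwAngle_eq_ite φ φ' f.theta

theorem along_eq_vecNorm_mul_cos (φ : ℝ) (f : LinFun) :
    along φ f = f.vecNorm * Real.cos (relAngle φ f) := by
  obtain ⟨k, hk⟩ := cong_add_ccwAngle φ f.theta
  have : relAngle φ f = f.theta - φ + k * (2 * Real.pi) := by rw [relAngle]; linarith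
  rw [this, Real.cos_add_int_mul_two_pi, Real.cos_sub, mul_add, ← mul_assoc, ← mul_assoc,
    vecNorm_mul_cos_theta, vecNorm_mul_sin_theta, along]

theorem across_eq_vecNorm_mul_sin (φ : ℝ) (f : LinFun) :
    across φ f = f.vecNorm * Real.sin (relAngle φ f) := by
  obtain ⟨k, hk⟩ := cong_add_ccwAngle φ f.theta
  have : relAngle φ f = f.theta - φ + k * (2 * Real.pi) := by rw [relAngle]; linarith
  rw [this, Real.sin_add_int_mul_two_pi, Real.sin_sub, mul_sub, ← mul_assoc, ← mul_assoc,
    vecNorm_mul_cos_theta, vecNorm_mul_sin_theta, across]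

theorem det_eq_vecNorm_mul_sin (φ : ℝ) (f g : LinFun) :
    det f g = f.vecNorm * g.vecNorm * Real.sin (relAngle φ g - relAngle φ f) := by
  simp only [det_eq_along_mul_across φ, along_eq_vecNorm_mul_cos, across_eq_vecNorm_mul_sin,
    Real.sin_sub]
  ring

theorem across_theta (f : LinFun) : across f.theta f = 0 := by
  rw [across_eq_vecNorm_mul_sin, relAngle_theta, Real.sin_zero, mul_zero]

theorem along_theta (f : LinFun) : along f.theta f = f.vecNorm := by
  rw [along_eq_vecNorm_mul_cos, relAngle_theta, Real.cos_zero, mul_one]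

theorem across_theta_add_pi (f : LinFun) : across (f.theta + Real.pi) f = 0 := by
  rw [across_add_pi, across_theta, neg_zero]

theorem along_theta_add_pi_neg (hf : f ≠ 1) : along (f.theta + Real.pi) f < 0 := by
  rw [along_add_pi, along_theta]
  exact neg_neg_of_pos (vecNorm_pos hf)

theorem across_eq_zero_of_relAngle_eq_zero (h : relAngle φ f = 0) : across φ f = 0 := by
  rw [across_eq_vecNorm_mul_sin, h, Real.sin_zero, mul_zero]

theorem across_nonneg_of_relAngle_le_pi (h : relAngle φ f ≤ Real.pi) : 0 ≤ across φ f := by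
  rw [across_eq_vecNorm_mul_sin]
  exact mul_nonneg (Real.sqrt_nonneg _)
    (Real.sin_nonneg_of_mem_Icc ⟨relAngle_nonneg φ f, h⟩)

theorem across_nonpos_of_pi_le_relAngle (h : Real.pi ≤ relAngle φ f) : across φ f ≤ 0 := by
  have hsin : Real.sin (relAngle φ f - 2 * Real.pi) ≤ 0 :=
    Real.sin_nonpos_of_nonpos_of_neg_pi_le (by linarith [relAngle_lt_two_pi φ f]) (by linarith)
  rw [across_eq_vecNorm_mul_sin]
  rw [Real.sin_sub_two_pi] at hsin
  exact mul_nonpos_of_nonneg_of_nonpos (Real.sqrt_nonneg _) hsin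

theorem relAngle_lt_pi_of_across_pos (h : 0 < across φ f) : relAngle φ f < Real.pi :=
  lt_of_not_ge fun hle => (across_nonpos_of_pi_le_relAngle hle).not_gt h

theorem relAngle_eq_zero_of_along_pos (hacross : across φ f = 0) (halong : 0 < along φ f) :
    relAngle φ f = 0 := by
  rw [across_eq_vecNorm_mul_sin] at hacross
  rw [along_eq_vecNorm_mul_cos] at halong
  have hcos : 0 < Real.cos (relAngle φ f) := pos_of_mul_pos_right halong (Real.sqrt_nonneg _)
  have hsin : Real.sin (relAngle φ f) = 0 :=
    (mul_eq_zero.mp hacross).resolve_left (left_ne_zero_of_mul halong.ne')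
  have : Real.cos (relAngle φ f) = 1 := by
    nlinarith [Real.sin_sq_add_cos_sq (relAngle φ f)]
  exact (Real.cos_eq_one_iff_of_lt_of_lt
    (by linarith [relAngle_nonneg φ f, Real.pi_pos]) (relAngle_lt_two_pi φ f)).mp this

theorem along_ne_zero_of_across_eq_zero (hf : f ≠ 1) (h : across φ f = 0) : along φ f ≠ 0 := by
  intro h'
  have hpos := vecNorm_pos hf
  have hsin : Real.sin (relAngle φ f) = 0 := by
    simpa [across_eq_vecNorm_mul_sin, hpos.ne'] using h
  have hcos : Real.cos (relAngle φ f) = 0 := by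
    simpa [along_eq_vecNorm_mul_cos, hpos.ne'] using h'
  simpa [hsin, hcos] using Real.sin_sq_add_cos_sq (relAngle φ f)

theorem relAngle_eq_zero_of_across_mul_det_nonneg (hf : f ≠ 1) (hfφ : across φ f = 0)
    (hgφ : across φ g ≠ 0) (h : 0 ≤ across φ g * det f g) : relAngle φ f = 0 := by
  have hsq : 0 ≤ along φ f * across φ g ^ 2 := by
    rw [det_eq_along_mul_across φ, hfφ] at h
    linarith
  have halong : 0 ≤ along φ f := nonneg_of_mul_nonneg_left hsq (by positivity)
  exact relAngle_eq_zero_of_along_pos hfφ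
    (halong.lt_of_ne' (along_ne_zero_of_across_eq_zero hf hfφ))

theorem relAngle_le_of_det_nonneg (hf : f ≠ 1) (hg : g ≠ 1) (hfπ : relAngle φ f < Real.pi)
    (h : 0 ≤ det f g) : relAngle φ f ≤ relAngle φ g := by
  by_contra! hlt
  have hsin : Real.sin (relAngle φ g - relAngle φ f) < 0 :=
    Real.sin_neg_of_neg_of_neg_pi_lt (by linarith) (by linarith [relAngle_nonneg φ g])
  rw [det_eq_vecNorm_mul_sin φ] at h
  exact h.not_gt (mul_neg_of_pos_of_neg (mul_pos (vecNorm_pos hf) (vecNorm_pos hg)) hsin)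

theorem det_eq_zero_of_relAngle_eq (h : relAngle φ f = relAngle φ g) : det f g = 0 := by
  rw [det_eq_vecNorm_mul_sin φ, h, sub_self, Real.sin_zero, mul_zero]

theorem cong_theta_of_across_eq_zero (hf : f ≠ 1) (h : across φ f = 0) :
    Cong f.theta φ ∨ Cong f.theta (φ + Real.pi) := by
  rcases (along_ne_zero_of_across_eq_zero hf h).lt_or_gt with hneg | hpos
  · right
    refine cong_of_ccwAngle_eq_zero (relAngle_eq_zero_of_along_pos ?_ ?_)
    · rw [across_add_pi, h, neg_zero]
    · rw [along_add_pi]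
      exact neg_pos.mpr hneg
  · exact Or.inl (cong_of_ccwAngle_eq_zero (relAngle_eq_zero_of_along_pos h hpos))

end LinFun

section CompList

variable {φ : ℝ} {L : List LinFun}

theorem compList_eq_prod_reverse (L : List LinFun) : compList L = L.reverse.prod :=
  List.foldr_reverse.symm

theorem compList_singleton (g : LinFun) : compList [g] = g := mul_one g

theorem compList_append (X Y : List LinFun) :
    compList (X ++ Y) = compList Y * compList X := by
  simp only [compList_eq_prod_reverse, List.reverse_append, List.prod_append]

theorem compList_cons (g : LinFun) (L : List LinFun) : compList (g :: L) = compList L * g := by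
  rw [← List.singleton_append, compList_append, compList_singleton]

theorem compList_a_pos (h : ∀ g ∈ L, 0 < g.a) : 0 < (compList L).a := by
  induction L with
  | nil => exact one_pos
  | cons g T ih =>
    rw [List.forall_mem_cons] at h
    rw [compList_cons, LinFun.mul_a]
    exact mul_pos (ih h.2) h.1

open Classical in
theorem compList_filter_ne_one (L : List LinFun) : compList (L.filter (· ≠ 1)) = compList L := by
  induction L with
  | nil => rfl
  | cons g T ih =>
    by_cases hg : g = 1
    · rw [List.filter_cons_of_neg (by simpa using hg), ih, compList_cons, hg, mul_one]
    · rw [List.filter_cons_of_pos (by simpa using hg), compList_cons, compList_cons, ih]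

theorem across_compList_nonneg (hpos : ∀ g ∈ L, 0 < g.a) (h : ∀ g ∈ L, 0 ≤ g.across φ) :
    0 ≤ (compList L).across φ := by
  induction L with
  | nil => exact (LinFun.across_one φ).ge
  | cons g T ih =>
    rw [List.forall_mem_cons] at hpos h
    rw [compList_cons, LinFun.across_mul]
    exact add_nonneg (mul_nonneg (compList_a_pos hpos.2).le h.1) (ih hpos.2 h.2)

theorem across_compList_nonpos (hpos : ∀ g ∈ L, 0 < g.a) (h : ∀ g ∈ L, g.across φ ≤ 0) :
    (compList L).across φ ≤ 0 := by
  simpa only [LinFun.across_add_pi, neg_nonneg] using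
    across_compList_nonneg (φ := φ + Real.pi) hpos
      (by simpa only [LinFun.across_add_pi, neg_nonneg] using h)

theorem exists_across_neg (hpos : ∀ g ∈ L, 0 < g.a) (hzero : (compList L).across φ = 0)
    (hne : ∃ g ∈ L, g.across φ ≠ 0) : ∃ g ∈ L, g.across φ < 0 := by
  by_contra! h
  obtain ⟨g, hg, hne⟩ := hne
  have hg' : 0 < g.across φ := (h g hg).lt_of_ne' hne
  obtain ⟨A, B, rfl⟩ := List.append_of_mem hg
  simp only [List.forall_mem_append, List.forall_mem_cons] at hpos h
  have hA := mul_nonneg hpos.2.1.le (across_compList_nonneg hpos.1 h.1)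
  have hB := across_compList_nonneg hpos.2.2 h.2.2
  have : 0 < (compList (A ++ g :: B)).across φ := by
    rw [compList_append, compList_cons, mul_assoc, LinFun.across_mul, LinFun.across_mul]
    have := mul_pos (compList_a_pos hpos.2.2) (add_pos_of_nonneg_of_pos hA hg')
    linarith
  exact this.ne' hzero

theorem exists_across_pos (hpos : ∀ g ∈ L, 0 < g.a) (hzero : (compList L).across φ = 0)
    (hne : ∃ g ∈ L, g.across φ ≠ 0) : ∃ g ∈ L, 0 < g.across φ := by
  simpa only [LinFun.across_add_pi, neg_neg_iff_pos] using
    exists_across_neg (φ := φ + Real.pi) hpos (by rw [LinFun.across_add_pi, hzero, neg_zero])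
      (by simpa only [LinFun.across_add_pi, neg_ne_zero] using hne)

end CompList

/-- `f` comes no later than `g` when directions are scanned counterclockwise from `φ`. -/
def AngleLE (φ : ℝ) (f g : LinFun) : Prop := f.relAngle φ ≤ g.relAngle φ

/-- The list form of local optimality: exchanging two adjacent blocks does not improve their
composite. -/
def NoImprovingSwap (L : List LinFun) : Prop :=
  ∀ A X Y B, L = A ++ X ++ Y ++ B → (compList (X ++ Y)).b ≤ (compList (Y ++ X)).b

/-- `L` is sorted counterclockwise from direction `φ`, except that functions in direction `φ`
itself may also come at the end, after a full turn. -/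
def SortedFrom (φ : ℝ) (L : List LinFun) : Prop :=
  ∃ X Y, L = X ++ Y ∧ X.Pairwise (AngleLE φ) ∧ ∀ g ∈ Y, g.relAngle φ = 0

instance {φ : ℝ} : Std.Refl (AngleLE φ) := ⟨fun _ => le_rfl⟩

instance {φ : ℝ} : IsTrans LinFun (AngleLE φ) := ⟨fun _ _ _ => le_trans⟩

namespace NoImprovingSwap

variable {φ : ℝ} {L A X Y B P G H R : List LinFun} {g : LinFun}

theorem det_nonneg (hL : NoImprovingSwap L) (h : L = A ++ X ++ Y ++ B) :
    0 ≤ (compList X).det (compList Y) := by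
  rw [← LinFun.mul_b_le_mul_b_iff, ← compList_append, ← compList_append]
  exact hL A X Y B h

theorem of_append (hL : NoImprovingSwap (P ++ (X ++ R))) : NoImprovingSwap X := by
  rintro A U V B rfl
  exact hL (P ++ A) U V (B ++ R) (by simp only [List.append_assoc])

section Reversing

variable (hpos : ∀ g ∈ L, 0 < g.a) (hL : NoImprovingSwap L)
  (halong : (compList L).along φ < 0) (hacross : (compList L).across φ = 0)
include hL halong hacross

theorem across_prefix_nonneg (h : L = X ++ Y) : 0 ≤ (compList X).across φ := by
  have hdet : 0 ≤ (compList X).det (compList L) := by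
    rw [h, compList_append, LinFun.det_mul_self_right]
    exact hL.det_nonneg (A := []) (B := []) (by simpa using h)
  rw [LinFun.det_eq_along_mul_across φ, hacross] at hdet
  exact nonneg_of_mul_nonpos_left (by linarith) halong

include hpos

theorem across_suffix_nonpos (h : L = X ++ Y) : (compList Y).across φ ≤ 0 := by
  have hX := across_prefix_nonneg hL halong hacross h
  rw [h, compList_append, LinFun.across_mul] at hacross
  rw [h, List.forall_mem_append] at hpos
  linarith [mul_nonneg (compList_a_pos hpos.2).le hX]

/-- With `u` and `v` the composites before and after the boundary between `G` and `H`, the cyclic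
identity for `v`, `G`, `H` makes `det v H` nonnegative, hence also `det (v * u) H`; but `v * u` is
the composite of `L`, which points opposite to `φ`. -/
theorem across_nonpos_of_adjacent (h : L = P ++ G ++ H ++ R) (hG : (compList G).across φ < 0) :
    (compList H).across φ ≤ 0 := by
  by_contra! hH
  let u := compList (P ++ G)
  let v := compList (H ++ R)
  have hLvu : compList L = v * u := by
    rw [h, List.append_assoc, compList_append]
  have hvpos : 0 < v.a := compList_a_pos fun g hg => hpos g (by simp_all)
  have hGH : 0 ≤ (compList G).det (compList H) := hL.det_nonneg h
  have hGv : 0 ≤ (compList G).det v :=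
    hL.det_nonneg (A := P) (B := []) (by simp [h])
  have huH : 0 ≤ u.det (compList H) := hL.det_nonneg (A := []) (B := R) (by simp [h])
  have hvφ : v.across φ ≤ 0 :=
    across_suffix_nonpos hpos hL halong hacross (X := P ++ G) (by simp [h])
  have hvH : 0 ≤ v.det (compList H) := by
    have hcyc := LinFun.across_mul_det_cyclic φ (compList G) v (compList H)
    rw [LinFun.det_swap (compList G) (compList H)] at hcyc
    have := mul_nonneg hH.le hGv
    have := mul_nonneg_of_nonpos_of_nonpos hvφ (neg_nonpos.mpr hGH)
    exact nonneg_of_mul_nonpos_right (by linarith) hG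
  have hLH : 0 ≤ (compList L).det (compList H) := by
    rw [hLvu, LinFun.det_mul_left]
    exact add_nonneg (mul_nonneg hvpos.le huH) hvH
  rw [LinFun.det_eq_along_mul_across φ, hacross, zero_mul, sub_zero] at hLH
  exact hLH.not_gt (mul_neg_of_neg_of_pos halong hH)

theorem across_nonpos_of_mem_of_across_neg (h : L = A ++ g :: B) (hg : g.across φ < 0) :
    ∀ k ∈ B, k.across φ ≤ 0 := by
  intro k hk
  obtain ⟨M, R, rfl⟩ := List.append_of_mem hk
  rw [← compList_singleton g] at hg
  rw [← compList_singleton k]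
  by_cases hM : 0 < (compList M).across φ
  · exact absurd hM (across_nonpos_of_adjacent hpos hL halong hacross (P := A) (R := k :: R)
      (by simp [h]) hg).not_gt
  · refine across_nonpos_of_adjacent hpos hL halong hacross (P := A) (G := [g] ++ M) (R := R)
      (by simp [h]) ?_
    rw [compList_append, LinFun.across_mul]
    have hMpos : 0 < (compList M).a := compList_a_pos fun x hx => hpos x (by simp [h, hx])
    linarith [mul_neg_of_pos_of_neg hMpos hg]

theorem exists_sign_blocks (hne : ∃ g ∈ L, g.across φ ≠ 0) : ∃ P p Q q Y,
    L = P ++ [p] ++ (Q ++ [q] ++ Y) ∧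
    ((∀ g ∈ P, 0 ≤ g.across φ) ∧ 0 < p.across φ) ∧
    ((∀ g ∈ Q, g.across φ ≤ 0) ∧ q.across φ < 0) ∧ ∀ g ∈ Y, g.across φ = 0 := by
  obtain ⟨P, p, T, rfl, hp, hT⟩ :=
    exists_eq_append_cons_of_last (exists_across_pos hpos hacross hne)
  have hP : ∀ g ∈ P, 0 ≤ g.across φ := by
    intro g hg
    obtain ⟨A, B, rfl⟩ := List.append_of_mem hg
    by_contra! hneg
    exact hp.not_ge <| across_nonpos_of_mem_of_across_neg hpos hL halong hacross
      (A := A) (B := B ++ p :: T) (by simp) hneg p (by simp)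
  have hTneg : ∃ g ∈ T, g.across φ < 0 := by
    obtain ⟨g, hg, hneg⟩ := exists_across_neg hpos hacross hne
    rcases List.mem_append.mp hg with hg | hg
    · exact absurd hneg (hP g hg).not_gt
    · rcases List.mem_cons.mp hg with rfl | hg
      · exact absurd hneg hp.not_gt
      · exact ⟨g, hg, hneg⟩
  obtain ⟨Q, q, Y, rfl, hq, hY⟩ := exists_eq_append_cons_of_last hTneg
  simp only [List.forall_mem_append, List.forall_mem_cons, not_lt] at hT hY
  exact ⟨P, p, Q, q, Y, by simp, ⟨hP, hp⟩, ⟨hT.1, hq⟩,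
    fun g hg => le_antisymm (hT.2.2 g hg) (hY g hg)⟩

end Reversing

theorem relAngle_lt_pi (hL : NoImprovingSwap (P ++ [g])) (hpos : ∀ k ∈ P ++ [g], 0 < k.a)
    (hne : ∀ k ∈ P, k ≠ 1) (hP : ∀ k ∈ P, 0 ≤ k.across φ) (hg : 0 < g.across φ) :
    ∀ k ∈ P ++ [g], k.relAngle φ < Real.pi := by
  rw [List.forall_mem_append, List.forall_mem_singleton]
  refine ⟨fun k hk => ?_, LinFun.relAngle_lt_pi_of_across_pos hg⟩
  rcases (hP k hk).lt_or_eq with hkφ | hkφ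
  · exact LinFun.relAngle_lt_pi_of_across_pos hkφ
  · obtain ⟨A, B, rfl⟩ := List.append_of_mem hk
    have hdet : 0 ≤ k.det (compList (B ++ [g])) := by
      rw [← compList_singleton k]
      exact hL.det_nonneg (A := A) (B := []) (by simp)
    have hB : 0 < (compList (B ++ [g])).across φ := by
      have := across_compList_nonneg (L := B) (φ := φ) (fun x hx => hpos x (by simp [hx]))
        (fun x hx => hP x (by simp [hx]))
      rw [compList_append, compList_singleton, LinFun.across_mul]
      linarith [mul_nonneg (hpos g (by simp)).le this]
    rw [LinFun.relAngle_eq_zero_of_across_mul_det_nonneg (hne k hk) hkφ.symm hB.ne'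
      (mul_nonneg hB.le hdet)]
    exact Real.pi_pos

theorem pairwise_angleLE (hL : NoImprovingSwap L) (hne : ∀ g ∈ L, g ≠ 1)
    (hπ : ∀ g ∈ L, g.relAngle φ < Real.pi) : L.Pairwise (AngleLE φ) := by
  rw [← List.isChain_iff_pairwise, List.isChain_iff_forall_rel_of_append_cons_cons]
  rintro f g A B rfl
  have hdet : 0 ≤ f.det g := by
    simpa only [compList_singleton] using
      hL.det_nonneg (A := A) (X := [f]) (Y := [g]) (B := B) (by simp)
  exact LinFun.relAngle_le_of_det_nonneg (hne f (by simp)) (hne g (by simp)) (hπ f (by simp)) hdet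

theorem relAngle_eq_zero_of_across_neg (hL : NoImprovingSwap (g :: Y)) (hpos : ∀ k ∈ Y, 0 < k.a)
    (hne : ∀ k ∈ Y, k ≠ 1) (hg : g.across φ < 0) (hY : ∀ k ∈ Y, k.across φ = 0) :
    ∀ k ∈ Y, k.relAngle φ = 0 := by
  intro k hk
  obtain ⟨A, B, rfl⟩ := List.append_of_mem hk
  have hdet : 0 ≤ (compList (g :: A)).det k := by
    rw [← compList_singleton k]
    exact hL.det_nonneg (A := []) (B := B) (by simp)
  have hA : (compList (g :: A)).across φ < 0 := by
    have hAφ : (compList A).across φ ≤ 0 :=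
      across_compList_nonpos (fun x hx => hpos x (by simp [hx]))
        (fun x hx => (hY x (by simp [hx])).le)
    have hApos : 0 < (compList A).a := compList_a_pos fun x hx => hpos x (by simp [hx])
    rw [compList_cons, LinFun.across_mul]
    linarith [mul_neg_of_pos_of_neg hApos hg]
  rw [LinFun.det_swap k] at hdet
  exact LinFun.relAngle_eq_zero_of_across_mul_det_nonneg (hne k hk) (hY k hk) hA.ne
    (mul_nonneg_of_nonpos_of_nonpos hA.le (by linarith))

theorem sortedFrom (hL : NoImprovingSwap L) (hpos : ∀ g ∈ L, 0 < g.a) (hne : ∀ g ∈ L, g ≠ 1)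
    (halong : (compList L).along φ < 0) (hacross : (compList L).across φ = 0)
    (hex : ∃ g ∈ L, g.across φ ≠ 0) : SortedFrom φ L := by
  obtain ⟨P, p, Q, q, Y, rfl, ⟨hP, hp⟩, ⟨hQ, hq⟩, hY⟩ :=
    exists_sign_blocks hpos hL halong hacross hex
  have hLP : NoImprovingSwap (P ++ [p]) := of_append (P := []) hL
  have hLQ : NoImprovingSwap (Q ++ [q]) := of_append (P := P ++ [p]) hL
  have hLY : NoImprovingSwap (q :: Y) :=
    of_append (P := P ++ [p] ++ Q) (R := []) (by simpa using hL)
  rw [List.forall_mem_append, List.forall_mem_append (l₁ := Q ++ [q])] at hpos hne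
  have hPπ := hLP.relAngle_lt_pi hpos.1 (List.forall_mem_append.mp hne.1).1 hP hp
  have hQπ : ∀ g ∈ Q ++ [q], g.relAngle (φ + Real.pi) < Real.pi :=
    hLQ.relAngle_lt_pi hpos.2.1 (List.forall_mem_append.mp hne.2.1).1
      (fun g hg => by rw [LinFun.across_add_pi]; exact neg_nonneg.mpr (hQ g hg))
      (by rw [LinFun.across_add_pi]; exact neg_pos.mpr hq)
  have hQφ : ∀ g ∈ Q ++ [q], g.relAngle φ = g.relAngle (φ + Real.pi) + Real.pi :=
    fun g hg => LinFun.relAngle_of_lt_pi (hQπ g hg)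
  refine ⟨P ++ [p] ++ (Q ++ [q]), Y, (List.append_assoc ..).symm, ?_,
    hLY.relAngle_eq_zero_of_across_neg hpos.2.2 hne.2.2 hq hY⟩
  refine List.pairwise_append.mpr ⟨hLP.pairwise_angleLE hne.1 hPπ, ?_, fun f hf g hg => ?_⟩
  · refine (hLQ.pairwise_angleLE hne.2.1 hQπ).imp_of_mem fun {f g} hf hg hfg => ?_
    rw [AngleLE, hQφ f hf, hQφ g hg]
    exact add_le_add_left hfg Real.pi
  · rw [AngleLE, hQφ g hg]
    linarith [hPπ f hf, LinFun.relAngle_nonneg (φ + Real.pi) g]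

end NoImprovingSwap

/-- Some rotation of `L` has nondecreasing polar angles. -/
def CyclicallySorted (L : List LinFun) : Prop := ∃ C, L ~r C ∧ C.Pairwise (AngleLE 0)

theorem exists_isRotated_pairwise {φ : ℝ} {C : List LinFun} (hC : C.Pairwise (AngleLE φ))
    (φ' : ℝ) : ∃ C', C ~r C' ∧ C'.Pairwise (AngleLE φ') := by
  obtain ⟨U, V, rfl, hU, hV⟩ :=
    exists_eq_append_of_pairwise_le hC (ccwAngle φ φ')
  refine ⟨V ++ U, List.isRotated_append, ?_⟩
  obtain ⟨hUs, hVs, -⟩ := List.pairwise_append.mp hC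
  refine List.pairwise_append.mpr ⟨hVs.imp_of_mem fun {f g} hf hg hfg => ?_,
    hUs.imp_of_mem fun {f g} hf hg hfg => ?_, fun f hf g hg => ?_⟩
  · rw [AngleLE] at hfg ⊢
    rw [LinFun.relAngle_eq_ite φ, LinFun.relAngle_eq_ite φ φ' g, if_pos (hV f hf),
      if_pos (hV g hg)]
    linarith
  · rw [AngleLE] at hfg ⊢
    rw [LinFun.relAngle_eq_ite φ, LinFun.relAngle_eq_ite φ φ' g, if_neg (hU f hf).not_ge,
      if_neg (hU g hg).not_ge]
    linarith
  · rw [AngleLE, LinFun.relAngle_eq_ite φ, LinFun.relAngle_eq_ite φ φ' g, if_pos (hV f hf),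
      if_neg (hU g hg).not_ge]
    linarith [LinFun.relAngle_lt_two_pi φ f, LinFun.relAngle_nonneg φ g]

theorem cyclicallySorted_iff {L : List LinFun} (φ : ℝ) :
    CyclicallySorted L ↔ ∃ X Y, L = X ++ Y ∧ (Y ++ X).Pairwise (AngleLE φ) := by
  constructor
  · rintro ⟨C, hLC, hC⟩
    obtain ⟨C', hCC', hC'⟩ := exists_isRotated_pairwise hC φ
    obtain ⟨X, Y, hL, rfl⟩ := isRotated_iff_exists_append.mp (hLC.trans hCC')
    exact ⟨X, Y, hL, hC'⟩
  · rintro ⟨X, Y, rfl, h⟩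
    obtain ⟨C, hC, hC'⟩ := exists_isRotated_pairwise h 0
    exact ⟨C, List.isRotated_append.trans hC, hC'⟩

section SortedFrom

variable {φ : ℝ} {L X Y : List LinFun}

theorem pairwise_angleLE_append (hX : X.Pairwise (AngleLE φ)) (hY : ∀ g ∈ Y, g.relAngle φ = 0) :
    (Y ++ X).Pairwise (AngleLE φ) :=
  List.pairwise_append.mpr ⟨List.pairwise_of_forall_mem_list fun f hf g _ =>
    (hY f hf).trans_le (g.relAngle_nonneg φ), hX,
    fun f hf g _ => (hY f hf).trans_le (g.relAngle_nonneg φ)⟩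

theorem SortedFrom.cyclicallySorted (h : SortedFrom φ L) : CyclicallySorted L := by
  obtain ⟨X, Y, rfl, hX, hY⟩ := h
  exact (cyclicallySorted_iff φ).mpr ⟨X, Y, rfl, pairwise_angleLE_append hX hY⟩

theorem SortedFrom.cons {g : LinFun} (hg : g.relAngle φ = 0) (h : SortedFrom φ L) :
    SortedFrom φ (g :: L) := by
  obtain ⟨X, Y, rfl, hX, hY⟩ := h
  exact ⟨g :: X, Y, rfl, pairwise_angleLE_append (Y := [g]) hX (by simpa using hg), hY⟩

theorem SortedFrom.relAngle_head_lt {f g : LinFun} (h : SortedFrom φ L)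
    (hne : ∃ f ∈ L, ∃ g ∈ L, f.relAngle φ ≠ g.relAngle φ) (hf : f ∈ L.head?)
    (hg : g ∈ L.getLast?) : g.relAngle φ = 0 ∨ f.relAngle φ < g.relAngle φ := by
  obtain ⟨X, Y, rfl, hX, hY⟩ := h
  rcases Y.eq_nil_or_concat' with rfl | ⟨Y, y, rfl⟩
  · rw [List.append_nil] at hf hg hne
    obtain ⟨hX0, rfl⟩ := List.mem_getLast?_eq_getLast hg
    obtain rfl : X.head hX0 = f := (List.head_eq_iff_head?_eq_some hX0).mpr hf
    refine Or.inr (lt_of_not_ge fun hle => ?_)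
    have hconst : ∀ k ∈ X, k.relAngle φ = (X.head hX0).relAngle φ := fun k hk =>
      le_antisymm ((hX.rel_getLast hk).trans hle) (hX.rel_head hk)
    obtain ⟨k, hk, l, hl, hkl⟩ := hne
    exact hkl ((hconst k hk).trans (hconst l hl).symm)
  · have : y = g := by simpa [← List.append_assoc] using hg
    exact Or.inl (hY g (by simp [this]))

theorem SortedFrom.of_pairwise_append {f g : LinFun} (h : (Y ++ X).Pairwise (AngleLE φ))
    (hf : f ∈ (X ++ Y).head?) (hg : g ∈ (X ++ Y).getLast?)
    (hfg : g.relAngle φ = 0 ∨ f.relAngle φ < g.relAngle φ) : SortedFrom φ (X ++ Y) := by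
  obtain ⟨hY, hX, hYX⟩ := List.pairwise_append.mp h
  rcases X with _ | ⟨x, X⟩
  · exact ⟨Y, [], by simp, hY, by simp⟩
  rcases Y.eq_nil_or_concat' with rfl | ⟨Y, y, rfl⟩
  · exact ⟨x :: X, [], rfl, hX, by simp⟩
  obtain rfl : x = f := by simpa using hf
  obtain rfl : y = g := by
    rw [← List.append_assoc] at hg
    simpa only [List.getLast?_concat, Option.mem_some_iff] using hg
  have hy : y.relAngle φ = 0 :=
    hfg.resolve_right (hYX y (by simp) x (by simp)).not_gt
  refine ⟨x :: X, Y ++ [y], rfl, hX, fun k hk => le_antisymm ?_ (k.relAngle_nonneg φ)⟩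
  have hky : AngleLE φ k y := by simpa using hY.rel_getLast hk
  exact hky.trans hy.le

theorem sortedFrom_iff (hne : ∃ f ∈ L, ∃ g ∈ L, f.relAngle φ ≠ g.relAngle φ) :
    SortedFrom φ L ↔ CyclicallySorted L ∧
      ∃ f g, f ∈ L.head? ∧ g ∈ L.getLast? ∧ φ ∈ Icc2pi g.theta f.theta := by
  simp only [mem_Icc2pi_iff]
  constructor
  · intro h
    have hL : L ≠ [] := by
      rintro rfl
      simp at hne
    have hhead := List.head_mem_head? hL
    have hlast := List.getLast_mem_getLast? hL
    exact ⟨h.cyclicallySorted, _, _, hhead, hlast, h.relAngle_head_lt hne hhead hlast⟩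
  · rintro ⟨hL, f, g, hf, hg, hfg⟩
    obtain ⟨X, Y, rfl, hYX⟩ := (cyclicallySorted_iff φ).mp hL
    exact SortedFrom.of_pairwise_append hYX hf hg hfg

end SortedFrom

section Comparison

variable {φ : ℝ} {L L' X Y : List LinFun}

theorem compList_eq_of_perm_of_pairwise (hp : L.Perm L') (h : L.Pairwise (AngleLE φ))
    (h' : L'.Pairwise (AngleLE φ)) : compList L = compList L' := by
  rw [compList_eq_prod_reverse, compList_eq_prod_reverse]
  refine list_prod_eq_of_perm_of_pairwise (r := fun f g => AngleLE φ g f)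
    (fun f g hgf hfg => ?_) ((L.reverse_perm.trans hp).trans L'.reverse_perm.symm)
    (List.pairwise_reverse.mpr h) (List.pairwise_reverse.mpr h')
  exact LinFun.commute_of_det_eq_zero
    (LinFun.det_eq_zero_of_relAngle_eq (le_antisymm hfg hgf))

theorem across_compList_nonneg_of_pairwise_append (hpos : ∀ g ∈ Y ++ X, 0 < g.a)
    (h : (Y ++ X).Pairwise (AngleLE φ)) (hacross : (compList (Y ++ X)).across φ = 0) :
    0 ≤ (compList Y).across φ := by
  rw [List.forall_mem_append] at hpos
  obtain ⟨-, -, hYX⟩ := List.pairwise_append.mp h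
  by_cases hY : ∀ g ∈ Y, g.relAngle φ ≤ Real.pi
  · exact across_compList_nonneg hpos.1
      fun g hg => LinFun.across_nonneg_of_relAngle_le_pi (hY g hg)
  · push Not at hY
    obtain ⟨g, hg, hgπ⟩ := hY
    have hX : (compList X).across φ ≤ 0 := across_compList_nonpos hpos.2 fun k hk =>
      LinFun.across_nonpos_of_pi_le_relAngle (hgπ.le.trans (hYX g hg k hk))
    rw [compList_append, LinFun.across_mul] at hacross
    exact nonneg_of_mul_nonneg_right (by linarith) (compList_a_pos hpos.2)

theorem compList_append_b_le_of_pairwise (hpos : ∀ g ∈ Y ++ X, 0 < g.a)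
    (h : (Y ++ X).Pairwise (AngleLE φ)) (halong : (compList (Y ++ X)).along φ < 0)
    (hacross : (compList (Y ++ X)).across φ = 0) :
    (compList (Y ++ X)).b ≤ (compList (X ++ Y)).b := by
  have hY := across_compList_nonneg_of_pairwise_append hpos h hacross
  rw [compList_append Y, compList_append X, LinFun.mul_b_le_mul_b_iff,
    ← LinFun.det_mul_self_right, ← compList_append, LinFun.det_swap,
    LinFun.det_eq_along_mul_across φ, hacross, zero_mul, sub_zero, neg_nonneg]
  exact mul_nonpos_of_nonpos_of_nonneg halong.le hY

theorem compList_append_comm_of_relAngle_eq_zero (hpos : ∀ g ∈ Y, 0 < g.a)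
    (hY : ∀ g ∈ Y, g.relAngle φ = 0) (hacross : (compList (X ++ Y)).across φ = 0) :
    compList (X ++ Y) = compList (Y ++ X) := by
  have hYφ : (compList Y).across φ = 0 :=
    le_antisymm
      (across_compList_nonpos hpos fun g hg =>
        (LinFun.across_eq_zero_of_relAngle_eq_zero (hY g hg)).le)
      (across_compList_nonneg hpos fun g hg =>
        (LinFun.across_eq_zero_of_relAngle_eq_zero (hY g hg)).ge)
  have hXφ : (compList X).across φ = 0 := by
    rw [compList_append, LinFun.across_mul, hYφ, add_zero] at hacross
    exact (mul_eq_zero.mp hacross).resolve_left (compList_a_pos hpos).ne'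
  rw [compList_append, compList_append]
  apply LinFun.commute_of_det_eq_zero
  rw [LinFun.det_eq_along_mul_across φ, hXφ, hYφ, mul_zero, zero_mul, sub_zero]

theorem SortedFrom.compList_b_le (h : SortedFrom φ L) (h' : CyclicallySorted L')
    (hp : L.Perm L') (hpos : ∀ g ∈ L, 0 < g.a) (halong : (compList L).along φ < 0)
    (hacross : (compList L).across φ = 0) : (compList L).b ≤ (compList L').b := by
  obtain ⟨X, Y, rfl, hX, hY⟩ := h
  obtain ⟨X', Y', rfl, hYX'⟩ := (cyclicallySorted_iff φ).mp h'
  have hperm : (X ++ Y).Perm (Y' ++ X') := hp.trans List.perm_append_comm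
  have hcomp : compList (X ++ Y) = compList (Y' ++ X') :=
    (compList_append_comm_of_relAngle_eq_zero (List.forall_mem_append.mp hpos).2 hY hacross).trans
      (compList_eq_of_perm_of_pairwise (List.perm_append_comm.trans hperm)
        (pairwise_angleLE_append hX hY) hYX')
  rw [hcomp] at halong hacross ⊢
  exact compList_append_b_le_of_pairwise (fun g hg => hpos g (hperm.mem_iff.mpr hg)) hYX' halong
    hacross

end Comparison

theorem exists_permList_eq {n : ℕ} {f : Fin n → LinFun} {σ : Equiv.Perm (Fin n)} {L : List LinFun}
    (hL : L.Perm (permList f σ)) : ∃ ρ, permList f ρ = L := by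
  have hLf : L.Perm ((List.finRange n).map f) := by
    rw [← List.ofFn_eq_map]
    exact hL.trans (σ.ofFn_comp_perm f)
  obtain ⟨I, rfl, hI⟩ : Relation.Comp (· = List.map f ·) List.Perm L (List.finRange n) := by
    rwa [List.eq_map_comp_perm]
  have hlen : I.length = n := by simpa using hI.length_eq
  have hinj : Function.Injective fun i : Fin n => I[i] := fun i j hij =>
    Fin.ext ((hI.nodup_iff.mpr (List.nodup_finRange n)).getElem_inj_iff.mp hij)
  refine ⟨Equiv.ofBijective _ (Finite.injective_iff_bijective.mp hinj), ?_⟩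
  apply List.ext_getElem
  · simp [permList, hlen]
  · simp [permList]

open Classical in
/-- The functions other than the identity, in the order given by `σ`. -/
noncomputable def nonIdList {n : ℕ} (f : Fin n → LinFun) (σ : Equiv.Perm (Fin n)) :
    List LinFun := (permList f σ).filter (· ≠ 1)

section Permutations

variable {n : ℕ} {f : Fin n → LinFun} {σ : Equiv.Perm (Fin n)} {L : List LinFun} {g : LinFun}

theorem compList_nonIdList (f : Fin n → LinFun) (σ : Equiv.Perm (Fin n)) :
    compList (nonIdList f σ) = permComp f σ :=
  compList_filter_ne_one (permList f σ)

theorem mem_nonIdList : g ∈ nonIdList f σ ↔ (∃ i, f i = g) ∧ g ≠ 1 := by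
  classical
  rw [nonIdList, List.mem_filter, permList, List.mem_ofFn, decide_eq_true_iff]
  exact and_congr_left' (σ.surjective.exists (p := fun i => f i = g)).symm

theorem a_pos_of_mem_nonIdList (hf : ∀ i, 0 < (f i).a) : ∀ g ∈ nonIdList f σ, 0 < g.a := by
  intro g hg
  obtain ⟨⟨i, rfl⟩, -⟩ := mem_nonIdList.mp hg
  exact hf i

theorem nonIdList_perm (f : Fin n → LinFun) (σ ρ : Equiv.Perm (Fin n)) :
    (nonIdList f σ).Perm (nonIdList f ρ) :=
  ((σ.ofFn_comp_perm f).trans (ρ.ofFn_comp_perm f).symm).filter _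

theorem exists_nonIdList_eq (hL : L.Perm (nonIdList f σ)) : ∃ ρ, nonIdList f ρ = L := by
  classical
  have hfilter : L.filter (· ≠ 1) = L := by
    rw [List.filter_eq_self]
    intro g hg
    simpa using (mem_nonIdList.mp (hL.subset hg)).2
  obtain ⟨ρ, hρ⟩ := exists_permList_eq (L := L ++ (permList f σ).filter (fun g => !decide (g ≠ 1)))
    ((hL.append_right _).trans (List.filter_append_perm _ _))
  refine ⟨ρ, ?_⟩
  rw [nonIdList, hρ, List.filter_append, hfilter]
  simp

theorem IsMinimum.noImprovingSwap (hσ : IsMinimum f σ) (hf : ∀ i, 0 < (f i).a) :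
    NoImprovingSwap (nonIdList f σ) := by
  intro A X Y B h
  obtain ⟨ρ, hρ⟩ : ∃ ρ, nonIdList f ρ = A ++ Y ++ X ++ B :=
    exists_nonIdList_eq (σ := σ) (by
      rw [h, List.append_assoc A Y X, List.append_assoc A X Y]
      exact (List.perm_append_comm.append_left A).append_right B)
  have hB : 0 < (compList B).a := compList_a_pos fun g hg =>
    a_pos_of_mem_nonIdList (σ := σ) hf g (by simp [h, hg])
  have ha : (compList (X ++ Y)).a = (compList (Y ++ X)).a := by
    rw [compList_append, compList_append, LinFun.mul_a, LinFun.mul_a, mul_comm]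
  have hle := hσ ρ
  rw [← compList_nonIdList, ← compList_nonIdList, h, hρ, List.append_assoc A X Y,
    List.append_assoc A Y X] at hle
  simp only [compList_append _ B, compList_append A, LinFun.mul_b, ha] at hle
  exact le_of_add_le_add_left (le_of_mul_le_mul_left (le_of_add_le_add_right hle) hB)

open Classical in
theorem counterclockwise_iff : Counterclockwise f σ ↔ CyclicallySorted (nonIdList f σ) := by
  let r : LinFun → LinFun → Prop := fun x y => x ≠ 1 → y ≠ 1 → x.theta ≤ y.theta
  have : Std.Refl r := ⟨fun _ _ _ => le_rfl⟩
  have hfilter (L : List LinFun) :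
      (L.filter (· ≠ 1)).Pairwise (AngleLE 0) ↔ L.Pairwise r := by
    simp [List.pairwise_filter, AngleLE, LinFun.relAngle_zero, r]
  have hcut (c : ℕ) : ((permList f σ).drop c ++ (permList f σ).take c).Pairwise r ↔ _ :=
    pairwise_drop_append_take_ofFn c
  rw [cyclicallySorted_iff 0]
  constructor
  · rintro ⟨c, hc⟩
    refine ⟨_, _, ((List.filter_append ..).symm.trans
      (congrArg _ (List.take_append_drop c (permList f σ)))).symm, ?_⟩
    rw [← List.filter_append, hfilter, hcut]
    exact fun i j hij hi hj => hc i j hi hj hij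
  · rintro ⟨X, Y, hL, hYX⟩
    obtain ⟨U, V, hUV, rfl, rfl⟩ := List.filter_eq_append_iff.mp hL
    have hV : (permList f σ).drop U.length = V := by rw [hUV, List.drop_left]
    have hU : (permList f σ).take U.length = U := by rw [hUV, List.take_left]
    rw [← List.filter_append, hfilter, ← hV, ← hU, List.length_take_of_le (by simp [hUV]),
      hcut] at hYX
    exact ⟨U.length, fun i j hi hj hij => hYX i j hij hi hj⟩

theorem mem_head?_nonIdList : g ∈ (nonIdList f σ).head? ↔
    ∃ s, (¬ (f (σ s)).IsId ∧ ∀ i, i < s → (f (σ i)).IsId) ∧ f (σ s) = g := by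
  rw [nonIdList, List.head?_filter, Option.mem_def, permList, List.find?_ofFn_eq_some]
  simp only [decide_eq_true_iff, not_not]
  constructor
  · rintro ⟨hg, s, rfl, hs⟩
    exact ⟨s, ⟨hg, hs⟩, rfl⟩
  · rintro ⟨s, ⟨hg, hs⟩, rfl⟩
    exact ⟨hg, s, rfl, hs⟩

theorem nonIdList_revPerm_trans (f : Fin n → LinFun) (σ : Equiv.Perm (Fin n)) :
    nonIdList f (Fin.revPerm.trans σ) = (nonIdList f σ).reverse := by
  rw [nonIdList, nonIdList, ← List.filter_reverse]
  congr 1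
  refine List.ext_getElem (by simp [permList]) fun i _ _ => ?_
  simp only [permList, List.getElem_reverse, List.getElem_ofFn, List.length_ofFn]
  exact congrArg (fun i => f (σ i)) (Fin.ext (Nat.sub_right_comm n i 1))

theorem mem_getLast?_nonIdList : g ∈ (nonIdList f σ).getLast? ↔
    ∃ t, (¬ (f (σ t)).IsId ∧ ∀ i, t < i → (f (σ i)).IsId) ∧ f (σ t) = g := by
  have hrev (t : Fin n) : (∀ i, t < i → (f (σ i)).IsId) ↔
      ∀ i : Fin n, t < i.rev → (f (σ i.rev)).IsId :=
    Fin.rev_surjective.forall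
  rw [← List.head?_reverse, ← nonIdList_revPerm_trans, mem_head?_nonIdList,
    Fin.revPerm.exists_congr_left]
  simp only [Fin.revPerm_symm, Fin.revPerm_apply, Equiv.trans_apply, Fin.rev_rev, Fin.lt_rev_iff,
    hrev]

theorem exists_across_ne_zero (hnc : ¬ Colinear f) (σ : Equiv.Perm (Fin n)) (φ : ℝ) :
    ∃ g ∈ nonIdList f σ, g.across φ ≠ 0 := by
  by_contra! h
  exact hnc ⟨φ, fun i => or_iff_not_imp_left.mpr fun hi =>
    LinFun.cong_theta_of_across_eq_zero hi (h _ (mem_nonIdList.mpr ⟨⟨i, rfl⟩, hi⟩))⟩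

theorem exists_relAngle_ne (hnc : ¬ Colinear f) (σ : Equiv.Perm (Fin n)) (φ : ℝ) :
    ∃ g ∈ nonIdList f σ, ∃ k ∈ nonIdList f σ, g.relAngle φ ≠ k.relAngle φ := by
  obtain ⟨g, hg, -⟩ := exists_across_ne_zero hnc σ 0
  obtain ⟨k, hk, hgk⟩ := exists_across_ne_zero hnc σ g.theta
  refine ⟨g, hg, k, hk, fun h => ?_⟩
  have hdet := LinFun.det_eq_zero_of_relAngle_eq h
  rw [LinFun.det_eq_along_mul_across g.theta, LinFun.across_theta, LinFun.along_theta, zero_mul,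
    sub_zero] at hdet
  exact mul_ne_zero (LinFun.vecNorm_pos (mem_nonIdList.mp hg).2).ne' hgk hdet

theorem permComp_ne_one_of_isMinimum (hf : ∀ i, 0 < (f i).a) (hnc : ¬ Colinear f)
    (hnp : ¬ PotentiallyIdentical f) (hσ : IsMinimum f σ) : permComp f σ ≠ 1 := by
  intro hid
  refine hnp ⟨σ, counterclockwise_iff.mpr ?_, hid⟩
  have hL := hσ.noImprovingSwap hf
  have hpos := a_pos_of_mem_nonIdList (σ := σ) hf
  have hne : ∀ g ∈ nonIdList f σ, g ≠ 1 := fun g hg => (mem_nonIdList.mp hg).2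
  have hexists := exists_across_ne_zero hnc σ
  rw [← compList_nonIdList] at hid
  generalize nonIdList f σ = L at *
  rcases L with _ | ⟨g, T⟩
  · simp at hexists
  rw [List.forall_mem_cons] at hpos hne
  have hacross : (compList T).across g.theta = 0 := by
    have := congrArg (LinFun.across g.theta) hid
    rwa [compList_cons, LinFun.across_mul, LinFun.across_theta, mul_zero, zero_add,
      LinFun.across_one] at this
  have halong : (compList T).along g.theta < 0 := by
    have := congrArg (LinFun.along g.theta) hid
    rw [compList_cons, LinFun.along_mul, LinFun.along_theta, LinFun.along_one] at this
    linarith [mul_pos (compList_a_pos hpos.2) (LinFun.vecNorm_pos hne.1)]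
  have hexT : ∃ k ∈ T, k.across g.theta ≠ 0 := by
    obtain ⟨k, hk, hkg⟩ := hexists g.theta
    refine ⟨k, (List.mem_cons.mp hk).resolve_left ?_, hkg⟩
    rintro rfl
    exact hkg (LinFun.across_theta k)
  have hT : NoImprovingSwap T := .of_append (P := [g]) (R := []) (by simpa using hL)
  exact ((hT.sortedFrom hpos.2 hne.2 halong hacross hexT).cons g.relAngle_theta).cyclicallySorted

theorem IsMinimum.sortedFrom (hσ : IsMinimum f σ) (hf : ∀ i, 0 < (f i).a) (hnc : ¬ Colinear f)
    (hnp : ¬ PotentiallyIdentical f) :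
    SortedFrom ((permComp f σ).theta + Real.pi) (nonIdList f σ) := by
  have hF := permComp_ne_one_of_isMinimum hf hnc hnp hσ
  rw [← compList_nonIdList] at hF ⊢
  exact (hσ.noImprovingSwap hf).sortedFrom (a_pos_of_mem_nonIdList hf)
    (fun g hg => (mem_nonIdList.mp hg).2) (LinFun.along_theta_add_pi_neg hF)
    (LinFun.across_theta_add_pi _) (exists_across_ne_zero hnc σ _)

theorem isMinimum_iff_sortedFrom (hf : ∀ i, 0 < (f i).a) (hnc : ¬ Colinear f)
    (hnp : ¬ PotentiallyIdentical f) :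
    IsMinimum f σ ↔ SortedFrom ((permComp f σ).theta + Real.pi) (nonIdList f σ) := by
  refine ⟨fun hσ => hσ.sortedFrom hf hnc hnp, fun h => ?_⟩
  have hF : permComp f σ ≠ 1 := fun hid =>
    hnp ⟨σ, counterclockwise_iff.mpr h.cyclicallySorted, hid⟩
  obtain ⟨ρ, hρ⟩ := Finite.exists_min fun ρ => (permComp f ρ).b
  have hle : (permComp f σ).b ≤ (permComp f ρ).b := by
    simp only [← compList_nonIdList] at h hF ⊢
    exact h.compList_b_le (IsMinimum.sortedFrom hρ hf hnc hnp).cyclicallySorted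
      (nonIdList_perm f σ ρ) (a_pos_of_mem_nonIdList hf) (LinFun.along_theta_add_pi_neg hF)
      (LinFun.across_theta_add_pi _)
  exact fun τ => hle.trans (hρ τ)

end Permutations

/-- characterization of minimum permutations in the generic case. -/
theorem stmt4 {n : ℕ} (f : Fin n → LinFun) (hf : ∀ i, 0 < (f i).a)
    (hnc : ¬ Colinear f) (hnp : ¬ PotentiallyIdentical f) (σ : Equiv.Perm (Fin n)) :
    IsMinimum f σ ↔
      (Counterclockwise f σ ∧
        ∃ s t : Fin n,
          (¬ (f (σ s)).IsId ∧ ∀ i, i < s → (f (σ i)).IsId) ∧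
          (¬ (f (σ t)).IsId ∧ ∀ i, t < i → (f (σ i)).IsId) ∧
          (permComp f σ).theta + Real.pi ∈ Icc2pi ((f (σ t)).theta) ((f (σ s)).theta)) := by
  rw [isMinimum_iff_sortedFrom hf hnc hnp, sortedFrom_iff (exists_relAngle_ne hnc σ _),
    counterclockwise_iff]
  refine and_congr_right' ⟨?_, ?_⟩
  · rintro ⟨g, k, hg, hk, hθ⟩
    obtain ⟨s, hs, rfl⟩ := mem_head?_nonIdList.mp hg
    obtain ⟨t, ht, rfl⟩ := mem_getLast?_nonIdList.mp hk
    exact ⟨s, t, hs, ht, hθ⟩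
  · rintro ⟨s, t, hs, ht, hθ⟩
    exact ⟨_, _, mem_head?_nonIdList.mpr ⟨s, hs, rfl⟩, mem_getLast?_nonIdList.mpr ⟨t, ht, rfl⟩, hθ⟩
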